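/- arXiv:1710.08837 — 2 statements merged into one kernel-verified Lean document; each statement's English description precedes it below -/
import Mathlib

section
/- The map ζ sending the isomorphism class [M] of a brick M to the torsion class Filt(Gen(M)) is a bijection from the set of isomorphism classes of bricks over Λ onto the set of completely join-irreducible elements of the lattice tors Λ ordered by containment. -/
/-!
Common definitions: the category `mod Λ` of finite(-dimensional) left `Λ`-modules,
torsion(-free) classes, filtration closures, bricks, minimal (co-)extending modules,
and the lattice-theoretic notions for `tors Λ` (ordered by containment).
-/

/-- A bundled (left) `Λ`-module with carrier in `Type`. -/
structure Mdl (Λ : Type) [Ring Λ] : Type 1 where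
  carrier : Type
  [isAddCommGroup : AddCommGroup carrier]
  [isModule : Module Λ carrier]

attribute [instance] Mdl.isAddCommGroup Mdl.isModule

instance {Λ : Type} [Ring Λ] : CoeSort (Mdl Λ) Type :=
  ⟨Mdl.carrier⟩

variable (Λ : Type) [Ring Λ]

/-- Bundle a module. -/
def Mdl.of (X : Type) [AddCommGroup X] [Module Λ X] : Mdl Λ :=
  { carrier := X }

/-- `M` and `N` are isomorphic `Λ`-modules. -/
def MIso (M N : Mdl Λ) : Prop :=
  Nonempty (M.carrier ≃ₗ[Λ] N.carrier)

/-- `N` is a factor (quotient) module of `M`. -/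
def IsFactor (M N : Mdl Λ) : Prop :=
  ∃ f : M.carrier →ₗ[Λ] N.carrier, Function.Surjective f

/-- `N` is a proper factor of `M` (a quotient by a nonzero submodule). -/
def IsProperFactor (M N : Mdl Λ) : Prop :=
  ∃ f : M.carrier →ₗ[Λ] N.carrier, Function.Surjective f ∧ ¬ Function.Injective f

/-- `N` is (isomorphic to) a submodule of `M`. -/
def IsSubmoduleOf (N M : Mdl Λ) : Prop :=
  ∃ f : N.carrier →ₗ[Λ] M.carrier, Function.Injective f

/-- `N` is (isomorphic to) a proper submodule of `M`. -/
def IsProperSubmoduleOf (N M : Mdl Λ) : Prop :=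
  ∃ f : N.carrier →ₗ[Λ] M.carrier, Function.Injective f ∧ ¬ Function.Surjective f

/-- `D` is (isomorphic to) a direct summand of `N`. -/
def IsSummand (D N : Mdl Λ) : Prop :=
  ∃ (i : D.carrier →ₗ[Λ] N.carrier) (p : N.carrier →ₗ[Λ] D.carrier),
    p.comp i = LinearMap.id

/-- `0 → A --f--> M --g--> B → 0` is a short exact sequence. -/
def IsSES {A M B : Mdl Λ} (f : A.carrier →ₗ[Λ] M.carrier)
    (g : M.carrier →ₗ[Λ] B.carrier) : Prop :=
  Function.Injective f ∧ Function.Surjective g ∧ LinearMap.range f = LinearMap.ker g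

/-- The short exact sequence `0 → A --f--> M --g--> B → 0` splits. -/
def SplitsSES {A M B : Mdl Λ} (_f : A.carrier →ₗ[Λ] M.carrier)
    (g : M.carrier →ₗ[Λ] B.carrier) : Prop :=
  ∃ s : B.carrier →ₗ[Λ] M.carrier, g.comp s = LinearMap.id

/-- `M` is an extension of `B` by `A`, i.e. there is a s.e.s. `0 → A → M → B → 0`. -/
def ExtOf (M A B : Mdl Λ) : Prop :=
  ∃ (f : A.carrier →ₗ[Λ] M.carrier) (g : M.carrier →ₗ[Λ] B.carrier), IsSES Λ f g

/-- A torsion class in `mod Λ`: a class of finite(-dimensional) modules containing `0`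
and closed under isomorphisms, factor modules and extensions. -/
structure IsTorsionClass (T : Set (Mdl Λ)) : Prop where
  fin : ∀ M ∈ T, Module.Finite Λ M.carrier
  zero_mem : ∀ M : Mdl Λ, Subsingleton M.carrier → M ∈ T
  iso_closed : ∀ M ∈ T, ∀ N : Mdl Λ, MIso Λ M N → N ∈ T
  factor_closed : ∀ M ∈ T, ∀ N : Mdl Λ, IsFactor Λ M N → N ∈ T
  ext_closed : ∀ A ∈ T, ∀ B ∈ T, ∀ M : Mdl Λ, ExtOf Λ M A B → M ∈ T

/-- A torsion-free class in `mod Λ`: a class of finite(-dimensional) modules containing `0`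
and closed under isomorphisms, submodules and extensions. -/
structure IsTorsionFreeClass (F : Set (Mdl Λ)) : Prop where
  fin : ∀ M ∈ F, Module.Finite Λ M.carrier
  zero_mem : ∀ M : Mdl Λ, Subsingleton M.carrier → M ∈ F
  iso_closed : ∀ M ∈ F, ∀ N : Mdl Λ, MIso Λ M N → N ∈ F
  sub_closed : ∀ M ∈ F, ∀ N : Mdl Λ, IsSubmoduleOf Λ N M → N ∈ F
  ext_closed : ∀ A ∈ F, ∀ B ∈ F, ∀ M : Mdl Λ, ExtOf Λ M A B → M ∈ F

/-- `Filt S M`: `M` admits a filtration `0 = M₀ ⊆ M₁ ⊆ ⋯ ⊆ M_l = M` whose successive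
quotients are isomorphic to modules in `S`. -/
inductive Filt (S : Set (Mdl Λ)) : Mdl Λ → Prop
  | of_subsingleton (M : Mdl Λ) (h : Subsingleton M.carrier) : Filt S M
  | step (M : Mdl Λ) (N : Submodule Λ M.carrier) (X : Mdl Λ) (hX : X ∈ S)
      (hN : Filt S (Mdl.of Λ N)) (e : Nonempty ((M.carrier ⧸ N) ≃ₗ[Λ] X.carrier)) :
      Filt S M

/-- The filtration closure `Filt(S)` as a set of modules. -/
def FiltSet (S : Set (Mdl Λ)) : Set (Mdl Λ) := {M | Filt Λ S M}

/-- `Gen(M)`: the class of factor modules of finite direct sums of copies of `M`. -/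
def GenSet (M : Mdl Λ) : Set (Mdl Λ) :=
  {N | ∃ (n : ℕ) (f : (Fin n → M.carrier) →ₗ[Λ] N.carrier), Function.Surjective f}

/-- `T^⊥ = {X ∈ mod Λ : Hom_Λ(N, X) = 0 for all N ∈ T}`. -/
def Perp (T : Set (Mdl Λ)) : Set (Mdl Λ) :=
  {X | Module.Finite Λ X.carrier ∧ ∀ N ∈ T, ∀ f : N.carrier →ₗ[Λ] X.carrier, f = 0}

/-- A brick: a module (in `mod Λ`) whose endomorphism ring is a division ring,
i.e. it is nonzero and every nonzero endomorphism is invertible. -/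
def IsBrick (M : Mdl Λ) : Prop :=
  Module.Finite Λ M.carrier ∧ Nontrivial M.carrier ∧
    ∀ f : M.carrier →ₗ[Λ] M.carrier, f ≠ 0 → Function.Bijective f

/-- An indecomposable module: nonzero, and not the direct sum of two nonzero submodules. -/
def Indec (M : Mdl Λ) : Prop :=
  Nontrivial M.carrier ∧
    ∀ p q : Submodule Λ M.carrier, IsCompl p q → p = ⊥ ∨ q = ⊥

/-- `M` is a minimal extending module for the torsion class `T`:
(P1) every proper factor of `M` is in `T`;
(P2) if `0 → M → X → N → 0` is non-split exact with `N ∈ T`, then `X ∈ T`;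
(P3) `Hom_Λ(T, M) = 0`. -/
structure IsMinExt (T : Set (Mdl Λ)) (M : Mdl Λ) : Prop where
  fin : Module.Finite Λ M.carrier
  p1 : ∀ N : Mdl Λ, IsProperFactor Λ M N → N ∈ T
  p2 : ∀ (X N : Mdl Λ) (f : M.carrier →ₗ[Λ] X.carrier) (g : X.carrier →ₗ[Λ] N.carrier),
      IsSES Λ f g → ¬ SplitsSES Λ f g → N ∈ T → X ∈ T
  p3 : ∀ N ∈ T, ∀ f : N.carrier →ₗ[Λ] M.carrier, f = 0

/-- `M` is a minimal co-extending module for the torsion-free class `F`: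
(P1') every proper submodule of `M` is in `F`;
(P2') if `0 → F' → X → M → 0` is non-split exact with `F' ∈ F`, then `X ∈ F`;
(P3') `Hom_Λ(M, F) = 0`. -/
structure IsMinCoExt (F : Set (Mdl Λ)) (M : Mdl Λ) : Prop where
  fin : Module.Finite Λ M.carrier
  p1 : ∀ N : Mdl Λ, IsProperSubmoduleOf Λ N M → N ∈ F
  p2 : ∀ (X F' : Mdl Λ) (f : F'.carrier →ₗ[Λ] X.carrier) (g : X.carrier →ₗ[Λ] M.carrier),
      IsSES Λ f g → ¬ SplitsSES Λ f g → F' ∈ F → X ∈ F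
  p3 : ∀ F' ∈ F, ∀ f : M.carrier →ₗ[Λ] F'.carrier, f = 0

/-- `T'` covers `T` in the lattice `tors Λ` of torsion classes ordered by containment. -/
def TorsCovers (T' T : Set (Mdl Λ)) : Prop :=
  IsTorsionClass Λ T' ∧ IsTorsionClass Λ T ∧ T ⊂ T' ∧
    ∀ Y : Set (Mdl Λ), IsTorsionClass Λ Y → T ⊂ Y → Y ⊆ T' → Y = T'

/-- `F'` covers `F` in the lattice `torf Λ` of torsion-free classes ordered by containment. -/
def TorfCovers (F' F : Set (Mdl Λ)) : Prop :=
  IsTorsionFreeClass Λ F' ∧ IsTorsionFreeClass Λ F ∧ F ⊂ F' ∧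
    ∀ Y : Set (Mdl Λ), IsTorsionFreeClass Λ Y → F ⊂ Y → Y ⊆ F' → Y = F'

/-- The join `⋁ A` of a family of torsion classes in `tors Λ`: the smallest torsion
class containing all members of `A`. -/
def TorsJoin (A : Set (Set (Mdl Λ))) : Set (Mdl Λ) :=
  ⋂₀ {T : Set (Mdl Λ) | IsTorsionClass Λ T ∧ ∀ S ∈ A, S ⊆ T}

/-- A completely join-irreducible element of `tors Λ`: a torsion class `T` such that
`T ∈ A` whenever `A` is a set of torsion classes with `⋁ A = T`. -/
def CompletelyJoinIrred (T : Set (Mdl Λ)) : Prop :=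
  IsTorsionClass Λ T ∧
    ∀ A : Set (Set (Mdl Λ)), (∀ S ∈ A, IsTorsionClass Λ S) → TorsJoin Λ A = T → T ∈ A

/-- The join representation `⋁ A` is irredundant in `tors Λ`:
every proper subset has strictly smaller join. -/
def TorsIrredundant (A : Set (Set (Mdl Λ))) : Prop :=
  ∀ B : Set (Set (Mdl Λ)), B ⊂ A → TorsJoin Λ B ⊂ TorsJoin Λ A

/-- `A` is the canonical join representation of its join in `tors Λ` (equivalently, a face
of the canonical join complex `Γ(tors Λ)`): `⋁ A` is irredundant, and `A ≪ B` for every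
irredundant join representation `⋁ B` of the same element. -/
def TorsCJR (A : Set (Set (Mdl Λ))) : Prop :=
  (∀ S ∈ A, IsTorsionClass Λ S) ∧ TorsIrredundant Λ A ∧
    ∀ B : Set (Set (Mdl Λ)), (∀ S ∈ B, IsTorsionClass Λ S) →
      TorsJoin Λ B = TorsJoin Λ A → TorsIrredundant Λ B → ∀ a ∈ A, ∃ b ∈ B, a ⊆ b

/-- `M` and `N` are hom-orthogonal: `Hom_Λ(M, N) = 0` and `Hom_Λ(N, M) = 0`. -/
def HomOrthogonal (M N : Mdl Λ) : Prop :=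
  (∀ f : M.carrier →ₗ[Λ] N.carrier, f = 0) ∧ ∀ f : N.carrier →ₗ[Λ] M.carrier, f = 0

/-!
For a brick `M`, a nonzero map from a module in `T(M) = Filt(Gen(M))` to `M` is onto: its image
`I` lies in `T(M)`, so it receives a nonzero map from `M`, and the composite `M → I ⊆ M` is then
bijective. Hence a torsion class strictly below `T(M)` does not contain `M` and so lies in the
torsion class of all `X` with `Hom(X, M) = 0`, which does not contain `M` either; this makes `T(M)`
completely join-irreducible. If `T(M) = T(M')` for bricks `M` and `M'`, they map onto each other,
hence are isomorphic.

Conversely, every torsion class `T` is the join of the `T(B)` over its bricks `B`. If some `X ∈ T`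
is not in a torsion class `U`, then `X` has a factor `B ∉ U` all of whose proper factors lie in `U`.
Such a `B` is a brick: for a nonzero non-injective endomorphism `f` of `B`, both
`f(B) ≅ B / ker f` and `B / f(B)` would lie in `U`, and hence so would `B`.
-/

section TorsionClasses

variable {Λ}

theorem linearMap_ne_zero_of_surjective {M N : Type*} [AddCommMonoid M] [Module Λ M]
    [AddCommMonoid N] [Module Λ N] [Nontrivial N] {f : M →ₗ[Λ] N} (hf : Function.Surjective f) :
    f ≠ 0 := by
  rintro rfl
  obtain ⟨y, hy⟩ := exists_ne (0 : N)
  obtain ⟨x, hx⟩ := hf y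
  exact hy hx.symm

theorem linearMap_comp_ne_zero_of_injective {M N P : Type*} [AddCommMonoid M] [Module Λ M]
    [AddCommMonoid N] [Module Λ N] [AddCommMonoid P] [Module Λ P] {f : M →ₗ[Λ] N} {g : N →ₗ[Λ] P}
    (hg : Function.Injective g) (hf : f ≠ 0) : g ∘ₗ f ≠ 0 :=
  fun h ↦ hf ((LinearMap.cancel_left hg).1 (h.trans g.comp_zero.symm))

/-! ### Extensions and filtrations -/

theorem MIso.isFactor {M N : Mdl Λ} (h : MIso Λ M N) : IsFactor Λ M N :=
  h.elim fun e ↦ ⟨e, e.surjective⟩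

theorem MIso.symm {M N : Mdl Λ} (h : MIso Λ M N) : MIso Λ N M :=
  h.map LinearEquiv.symm

theorem extOf_quotient (M : Mdl Λ) (N : Submodule Λ M) :
    ExtOf Λ M (Mdl.of Λ N) (Mdl.of Λ (M ⧸ N)) :=
  ⟨N.subtype, N.mkQ, N.injective_subtype, N.mkQ_surjective,
    N.range_subtype.trans N.ker_mkQ.symm⟩

theorem extOf_prod (A B : Mdl Λ) : ExtOf Λ (Mdl.of Λ (A × B)) A B :=
  ⟨LinearMap.inl Λ A B, LinearMap.snd Λ A B, LinearMap.inl_injective, LinearMap.snd_surjective,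
    LinearMap.range_inl Λ A B⟩

theorem ExtOf.finite {M A B : Mdl Λ} (h : ExtOf Λ M A B) (hA : Module.Finite Λ A)
    (hB : Module.Finite Λ B) : Module.Finite Λ M := by
  obtain ⟨f, g, -, hg, hfg⟩ := h
  exact Module.Finite.of_exact (LinearMap.exact_iff.2 hfg.symm) hg

theorem IsSES.extOf_comap {A M B : Mdl Λ} {f : A →ₗ[Λ] M} {g : M →ₗ[Λ] B} (h : IsSES Λ f g)
    (N : Submodule Λ B) : ExtOf Λ (Mdl.of Λ (N.comap g)) A (Mdl.of Λ N) := by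
  obtain ⟨hf, hg, hfg⟩ := h
  have hgf (a : A) : g (f a) = 0 := LinearMap.mem_ker.1 (hfg ▸ LinearMap.mem_range_self f a)
  have hfN (a : A) : f a ∈ N.comap g := by
    rw [Submodule.mem_comap, hgf]
    exact N.zero_mem
  have hgN : ∀ x ∈ N.comap g, g x ∈ N := fun _ hx ↦ hx
  have hexact : LinearMap.range (f.codRestrict (N.comap g) hfN) =
      LinearMap.ker (g.restrict hgN) := by
    rw [LinearMap.range_codRestrict, hfg, LinearMap.ker_restrict]
  refine ⟨f.codRestrict (N.comap g) hfN, g.restrict hgN, ?_, ?_, hexact⟩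
  · exact fun a b hab ↦ hf (congrArg Subtype.val hab)
  · rintro ⟨y, hy⟩
    obtain ⟨x, rfl⟩ := hg y
    exact ⟨⟨x, hy⟩, rfl⟩

theorem Filt.of_mIso {S : Set (Mdl Λ)} {M M' : Mdl Λ} (hM : Filt Λ S M) (h : MIso Λ M M') :
    Filt Λ S M' := by
  obtain ⟨e⟩ := h
  induction hM generalizing M' with
  | of_subsingleton M hM => exact .of_subsingleton M' e.symm.injective.subsingleton
  | step M N X hX _ hMN ih =>
    obtain ⟨φ⟩ := hMN
    exact .step M' (N.map e.toLinearMap) X hX (ih (e.submoduleMap N))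
      ⟨(Submodule.Quotient.equiv N _ e rfl).symm ≪≫ₗ φ⟩

theorem Filt.of_extOf {S : Set (Mdl Λ)} {M A B : Mdl Λ} (hA : Filt Λ S A) (hB : Filt Λ S B)
    (h : ExtOf Λ M A B) : Filt Λ S M := by
  induction hB generalizing M with
  | of_subsingleton B hB =>
    obtain ⟨f, g, hf, -, hfg⟩ := h
    have hf' : Function.Surjective f := by
      rw [← LinearMap.range_eq_top, hfg, LinearMap.ker_eq_top]
      exact Subsingleton.elim g 0
    exact hA.of_mIso ⟨.ofBijective f ⟨hf, hf'⟩⟩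
  | step B N X hX _ hBN ih =>
    obtain ⟨f, g, hfg⟩ := h
    obtain ⟨φ⟩ := hBN
    have hker : LinearMap.ker (N.mkQ ∘ₗ g) = N.comap g := by
      rw [LinearMap.ker_comp, N.ker_mkQ]
    have hsurj : Function.Surjective (N.mkQ ∘ₗ g) := N.mkQ_surjective.comp hfg.2.1
    exact .step M (N.comap g) X hX (ih (hfg.extOf_comap N))
      ⟨Submodule.quotEquivOfEq _ _ hker.symm ≪≫ₗ
        (N.mkQ ∘ₗ g).quotKerEquivOfSurjective hsurj ≪≫ₗ φ⟩

theorem Filt.of_isFactor {S : Set (Mdl Λ)} (hS : ∀ M ∈ S, ∀ N, IsFactor Λ M N → N ∈ S)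
    {M M' : Mdl Λ} (hM : Filt Λ S M) (h : IsFactor Λ M M') : Filt Λ S M' := by
  obtain ⟨p, hp⟩ := h
  induction hM generalizing M' with
  | of_subsingleton M hM => exact .of_subsingleton M' hp.subsingleton
  | step M N X hX _ hMN ih =>
    obtain ⟨φ⟩ := hMN
    let q : (M ⧸ N) →ₗ[Λ] M' ⧸ N.map p := N.mapQ (N.map p) p (N.le_comap_map p)
    have hq : Function.Surjective q := by
      rw [← LinearMap.range_eq_top, Submodule.range_mapQ, LinearMap.range_eq_top.2 hp,
        Submodule.map_top, Submodule.range_mkQ]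
    exact .step M' (N.map p) (Mdl.of Λ (M' ⧸ N.map p))
      (hS X hX _ ⟨q ∘ₗ φ.symm, hq.comp φ.symm.surjective⟩)
      (ih (p.submoduleMap N) (p.submoduleMap_surjective N)) ⟨.refl Λ _⟩

theorem Filt.finite {S : Set (Mdl Λ)} (hS : ∀ M ∈ S, Module.Finite Λ M) {M : Mdl Λ}
    (hM : Filt Λ S M) : Module.Finite Λ M := by
  induction hM with
  | of_subsingleton M _ => infer_instance
  | step M N X hX _ hMN ih =>
    obtain ⟨φ⟩ := hMN
    have := hS X hX
    exact (extOf_quotient M N).finite ih (Module.Finite.equiv φ.symm)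

theorem subset_filtSet (S : Set (Mdl Λ)) : S ⊆ FiltSet Λ S := fun M hM ↦
  Filt.step M ⊥ M hM (.of_subsingleton _ (inferInstanceAs (Subsingleton (⊥ : Submodule Λ M))))
    ⟨Submodule.quotEquivOfEqBot ⊥ rfl⟩

theorem Filt.exists_hom_ne_zero {S : Set (Mdl Λ)} {X : Mdl Λ} (hX : Filt Λ S X)
    (hX0 : Nontrivial X) : ∃ Y ∈ S, ∃ f : Y →ₗ[Λ] X, f ≠ 0 := by
  induction hX with
  | of_subsingleton X hX => exact absurd hX (not_subsingleton X)
  | step X N Y hY _ hXN ih =>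
    obtain hN | hN := subsingleton_or_nontrivial N
    · obtain ⟨φ⟩ := hXN
      have e : Y ≃ₗ[Λ] X :=
        φ.symm ≪≫ₗ Submodule.quotEquivOfEqBot N (Submodule.subsingleton_iff_eq_bot.1 hN)
      exact ⟨Y, hY, e, linearMap_ne_zero_of_surjective e.surjective⟩
    · obtain ⟨Z, hZ, f, hf⟩ := ih hN
      exact ⟨Z, hZ, N.subtype ∘ₗ f, linearMap_comp_ne_zero_of_injective N.injective_subtype hf⟩

/-! ### Torsion classes -/

theorem isTorsionClass_filtSet {S : Set (Mdl Λ)} (hfin : ∀ M ∈ S, Module.Finite Λ M)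
    (hfactor : ∀ M ∈ S, ∀ N, IsFactor Λ M N → N ∈ S) : IsTorsionClass Λ (FiltSet Λ S) where
  fin _ hM := Filt.finite hfin hM
  zero_mem := Filt.of_subsingleton
  iso_closed _ hM _ h := Filt.of_mIso hM h
  factor_closed _ hM _ h := Filt.of_isFactor hfactor hM h
  ext_closed _ hA _ hB _ h := Filt.of_extOf hA hB h

theorem IsTorsionClass.filtSet_subset {S T : Set (Mdl Λ)} (hT : IsTorsionClass Λ T)
    (hST : S ⊆ T) : FiltSet Λ S ⊆ T := by
  intro X hX
  induction hX with
  | of_subsingleton X hX => exact hT.zero_mem X hX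
  | step X N Y hY _ hXN ih =>
    have hquot : Mdl.of Λ (X ⧸ N) ∈ T :=
      hT.iso_closed Y (hST hY) _ (hXN.map LinearEquiv.symm)
    exact hT.ext_closed _ ih _ hquot X (extOf_quotient X N)

theorem IsTorsionClass.pi_mem {T : Set (Mdl Λ)} (hT : IsTorsionClass Λ T) {M : Mdl Λ}
    (hM : M ∈ T) (n : ℕ) : Mdl.of Λ (Fin n → M) ∈ T := by
  induction n with
  | zero => exact hT.zero_mem _ (inferInstanceAs (Subsingleton (Fin 0 → M)))
  | succ n ih =>
    exact hT.iso_closed _ (hT.ext_closed M hM _ ih _ (extOf_prod M _)) _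
      ⟨Fin.consLinearEquiv Λ fun _ ↦ M⟩

/-- The torsion class `⊥F = {X ∈ mod Λ : Hom_Λ(X, N) = 0 for all N ∈ F}`, dual to `Perp`. -/
def LeftPerp (F : Set (Mdl Λ)) : Set (Mdl Λ) :=
  {X | Module.Finite Λ X ∧ ∀ N ∈ F, ∀ f : X →ₗ[Λ] N, f = 0}

theorem isTorsionClass_leftPerp (F : Set (Mdl Λ)) : IsTorsionClass Λ (LeftPerp F) := by
  have factor_closed : ∀ X ∈ LeftPerp F, ∀ Y, IsFactor Λ X Y → Y ∈ LeftPerp F := by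
    rintro X ⟨hfin, hX⟩ Y ⟨p, hp⟩
    refine ⟨Module.Finite.of_surjective p hp, fun N hN f ↦ ?_⟩
    rw [← LinearMap.cancel_right hp, hX N hN (f ∘ₗ p), LinearMap.zero_comp]
  refine ⟨fun X hX ↦ hX.1, fun X _ ↦ ⟨inferInstance, fun N _ f ↦ Subsingleton.elim f 0⟩,
    fun X hX Y h ↦ factor_closed X hX Y h.isFactor, factor_closed, ?_⟩
  rintro A hA B hB X h
  refine ⟨h.finite hA.1 hB.1, fun N hN f ↦ ?_⟩
  obtain ⟨i, p, -, hp, hip⟩ := h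
  have hker : LinearMap.ker p ≤ LinearMap.ker f := by
    rw [← hip, LinearMap.range_le_ker_iff, hA.2 N hN (f ∘ₗ i)]
  have hlift : (LinearMap.ker p).liftQ f hker = 0 := by
    rw [← LinearMap.cancel_right (p.quotKerEquivOfSurjective hp).symm.surjective,
      LinearMap.zero_comp]
    exact hB.2 N hN _
  rw [← (LinearMap.ker p).liftQ_mkQ f hker, hlift, LinearMap.zero_comp]

theorem subset_torsJoin {A : Set (Set (Mdl Λ))} {S : Set (Mdl Λ)} (hS : S ∈ A) :
    S ⊆ TorsJoin Λ A :=
  fun _ hX _ hT ↦ hT.2 S hS hX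

theorem IsTorsionClass.torsJoin_subset {T : Set (Mdl Λ)} (hT : IsTorsionClass Λ T)
    {A : Set (Set (Mdl Λ))} (hA : ∀ S ∈ A, S ⊆ T) : TorsJoin Λ A ⊆ T :=
  Set.sInter_subset_of_mem ⟨hT, hA⟩

/-! ### The torsion class generated by a module -/

theorem self_mem_genSet (M : Mdl Λ) : M ∈ GenSet Λ M :=
  ⟨1, LinearMap.proj 0, LinearMap.proj_surjective 0⟩

theorem self_mem_filtSet_genSet (M : Mdl Λ) : M ∈ FiltSet Λ (GenSet Λ M) :=
  subset_filtSet _ (self_mem_genSet M)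

theorem IsFactor.genSet_subset {M M' : Mdl Λ} (h : IsFactor Λ M M') :
    GenSet Λ M' ⊆ GenSet Λ M := by
  rintro N ⟨n, f, hf⟩
  obtain ⟨p, hp⟩ := h
  exact ⟨n, f ∘ₗ p.compLeft (Fin n), hf.comp hp.comp_left⟩

theorem MIso.genSet_eq {M M' : Mdl Λ} (h : MIso Λ M M') : GenSet Λ M = GenSet Λ M' :=
  Set.Subset.antisymm h.symm.isFactor.genSet_subset h.isFactor.genSet_subset

theorem IsTorsionClass.genSet_subset {T : Set (Mdl Λ)} (hT : IsTorsionClass Λ T) {M : Mdl Λ}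
    (hM : M ∈ T) : GenSet Λ M ⊆ T :=
  fun N ⟨n, f, hf⟩ ↦ hT.factor_closed _ (hT.pi_mem hM n) N ⟨f, hf⟩

theorem IsTorsionClass.filtSet_genSet_subset {T : Set (Mdl Λ)} (hT : IsTorsionClass Λ T)
    {M : Mdl Λ} (hM : M ∈ T) : FiltSet Λ (GenSet Λ M) ⊆ T :=
  hT.filtSet_subset (hT.genSet_subset hM)

theorem isTorsionClass_filtSet_genSet (M : Mdl Λ) [Module.Finite Λ M] :
    IsTorsionClass Λ (FiltSet Λ (GenSet Λ M)) :=
  isTorsionClass_filtSet (fun _ ⟨_, f, hf⟩ ↦ Module.Finite.of_surjective f hf)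
    fun _ ⟨n, f, hf⟩ _ ⟨g, hg⟩ ↦ ⟨n, g ∘ₗ f, hg.comp hf⟩

theorem exists_hom_ne_zero_of_mem_filtSet_genSet {M X : Mdl Λ} (hX : X ∈ FiltSet Λ (GenSet Λ M))
    (hX0 : Nontrivial X) : ∃ f : M →ₗ[Λ] X, f ≠ 0 := by
  obtain ⟨Y, ⟨n, p, hp⟩, f, hf⟩ := Filt.exists_hom_ne_zero hX hX0
  by_contra! hM
  refine hf ((LinearMap.cancel_right hp).1 (LinearMap.pi_ext' fun i ↦ ?_))
  rw [hM ((f ∘ₗ p) ∘ₗ _), LinearMap.zero_comp, LinearMap.zero_comp]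

/-! ### Bricks -/

theorem IsBrick.surjective_of_ne_zero {M N : Mdl Λ} (hM : IsBrick Λ M)
    (hN : N ∈ FiltSet Λ (GenSet Λ M)) {f : N →ₗ[Λ] M} (hf : f ≠ 0) : Function.Surjective f := by
  obtain ⟨_, -, hend⟩ := hM
  have hrange : Mdl.of Λ (LinearMap.range f) ∈ FiltSet Λ (GenSet Λ M) :=
    (isTorsionClass_filtSet_genSet M).factor_closed N hN _
      ⟨f.rangeRestrict, f.surjective_rangeRestrict⟩
  have hrange0 : Nontrivial (LinearMap.range f) :=
    Submodule.nontrivial_iff_ne_bot.2 (LinearMap.range_eq_bot.not.2 hf)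
  obtain ⟨g, hg⟩ := exists_hom_ne_zero_of_mem_filtSet_genSet hrange hrange0
  have hg' : (LinearMap.range f).subtype ∘ₗ g ≠ 0 :=
    linearMap_comp_ne_zero_of_injective (Submodule.injective_subtype _) hg
  intro m
  obtain ⟨x, rfl⟩ := (hend _ hg').surjective m
  exact (g x).2

theorem IsBrick.subset_leftPerp {M : Mdl Λ} (hM : IsBrick Λ M) {S : Set (Mdl Λ)}
    (hS : IsTorsionClass Λ S) (hSM : S ⊆ FiltSet Λ (GenSet Λ M)) (hMS : M ∉ S) :
    S ⊆ LeftPerp {M} := by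
  refine fun X hX ↦ ⟨hS.fin X hX, ?_⟩
  rintro N rfl f
  by_contra hf
  exact hMS (hS.factor_closed X hX _ ⟨f, hM.surjective_of_ne_zero (hSM hX) hf⟩)

theorem notMem_leftPerp_self (M : Mdl Λ) [Nontrivial M] : M ∉ LeftPerp {M} :=
  fun h ↦ one_ne_zero (α := Module.End Λ M) (h.2 M rfl LinearMap.id)

theorem IsBrick.completelyJoinIrred {M : Mdl Λ} (hM : IsBrick Λ M) :
    CompletelyJoinIrred Λ (FiltSet Λ (GenSet Λ M)) := by
  obtain ⟨_, _, -⟩ := id hM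
  refine ⟨isTorsionClass_filtSet_genSet M, fun A hA hjoin ↦ ?_⟩
  have hle : ∀ S ∈ A, S ⊆ FiltSet Λ (GenSet Λ M) := fun S hS ↦ hjoin ▸ subset_torsJoin hS
  obtain ⟨S, hS, hMS⟩ : ∃ S ∈ A, M ∈ S := by
    by_contra! hMA
    have hperp : TorsJoin Λ A ⊆ LeftPerp {M} := (isTorsionClass_leftPerp {M}).torsJoin_subset
      fun S hS ↦ hM.subset_leftPerp (hA S hS) (hle S hS) (hMA S hS)
    exact notMem_leftPerp_self M (hperp (hjoin ▸ self_mem_filtSet_genSet M))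
  rwa [← (hle S hS).antisymm ((hA S hS).filtSet_genSet_subset hMS)]

theorem IsBrick.isFactor_of_mem_filtSet_genSet {M M' : Mdl Λ} (hM' : IsBrick Λ M')
    (hMM' : M ∈ FiltSet Λ (GenSet Λ M')) (hM'M : M' ∈ FiltSet Λ (GenSet Λ M)) :
    IsFactor Λ M M' := by
  obtain ⟨f, hf⟩ := exists_hom_ne_zero_of_mem_filtSet_genSet hM'M hM'.2.1
  exact ⟨f, hM'.surjective_of_ne_zero hMM' hf⟩

theorem IsBrick.mIso_of_isFactor {M M' : Mdl Λ} (hM : IsBrick Λ M) (h : IsFactor Λ M M')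
    (h' : IsFactor Λ M' M) : MIso Λ M M' := by
  obtain ⟨f, hf⟩ := h
  obtain ⟨g, hg⟩ := h'
  obtain ⟨-, _, hend⟩ := hM
  have hgf : g ∘ₗ f ≠ 0 := linearMap_ne_zero_of_surjective (hg.comp hf)
  have hinj : Function.Injective (g ∘ f) := (hend _ hgf).injective
  exact ⟨.ofBijective f ⟨hinj.of_comp, hf⟩⟩

theorem IsBrick.mIso_of_filtSet_genSet_eq {M M' : Mdl Λ} (hM : IsBrick Λ M) (hM' : IsBrick Λ M')
    (h : FiltSet Λ (GenSet Λ M) = FiltSet Λ (GenSet Λ M')) : MIso Λ M M' := by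
  have hMM' : M ∈ FiltSet Λ (GenSet Λ M') := h ▸ self_mem_filtSet_genSet M
  have hM'M : M' ∈ FiltSet Λ (GenSet Λ M) := h ▸ self_mem_filtSet_genSet M'
  exact hM.mIso_of_isFactor (hM'.isFactor_of_mem_filtSet_genSet hMM' hM'M)
    (hM.isFactor_of_mem_filtSet_genSet hM'M hMM')

theorem exists_isFactor_notMem_of_isProperFactor_mem {U : Set (Mdl Λ)} {X : Mdl Λ}
    [IsNoetherian Λ X] (hU : ∀ M ∈ U, ∀ N, MIso Λ M N → N ∈ U) (hX : X ∉ U) :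
    ∃ B, IsFactor Λ X B ∧ B ∉ U ∧ ∀ N, IsProperFactor Λ B N → N ∈ U := by
  have hbot : Mdl.of Λ (X ⧸ (⊥ : Submodule Λ X)) ∉ U := fun h ↦
    hX (hU _ h X ⟨Submodule.quotEquivOfEqBot ⊥ rfl⟩)
  obtain ⟨K, hK, hmax⟩ := exists_maximal_of_wellFoundedGT
    (fun K : Submodule Λ X ↦ Mdl.of Λ (X ⧸ K) ∉ U) ⟨⊥, hbot⟩
  refine ⟨Mdl.of Λ (X ⧸ K), ⟨K.mkQ, K.mkQ_surjective⟩, hK, fun N ⟨p, hp, hp'⟩ ↦ ?_⟩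
  let q : X →ₗ[Λ] N := p ∘ₗ K.mkQ
  have hq_ker : LinearMap.ker q = (LinearMap.ker p).comap K.mkQ := LinearMap.ker_comp _ _
  have hK_lt : K < LinearMap.ker q := by
    refine hq_ker ▸ (Submodule.le_comap_mkQ K _).lt_of_ne fun hK_eq ↦ hp' ?_
    rw [← LinearMap.ker_eq_bot]
    refine Submodule.comap_injective_of_surjective K.mkQ_surjective ?_
    rw [← hK_eq]
    exact K.ker_mkQ.symm
  by_contra hN
  have hq : Mdl.of Λ (X ⧸ LinearMap.ker q) ∉ U := fun h ↦
    hN (hU _ h N ⟨q.quotKerEquivOfSurjective (hp.comp K.mkQ_surjective)⟩)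
  exact hK_lt.not_ge (hmax hq hK_lt.le)

theorem IsTorsionClass.isBrick_of_isProperFactor_mem {U : Set (Mdl Λ)} (hU : IsTorsionClass Λ U)
    {B : Mdl Λ} [Module.Finite Λ B] [IsArtinian Λ B] (hB : B ∉ U)
    (hfactor : ∀ N, IsProperFactor Λ B N → N ∈ U) : IsBrick Λ B := by
  refine ⟨‹_›, ?_, fun f hf ↦ IsArtinian.bijective_of_injective_endomorphism f ?_⟩
  · by_contra hB0
    exact hB (hU.zero_mem B (not_nontrivial_iff_subsingleton.1 hB0))
  by_contra hinj
  have hrange : Mdl.of Λ (LinearMap.range f) ∈ U := hfactor _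
    ⟨f.rangeRestrict, f.surjective_rangeRestrict, f.injective_rangeRestrict_iff.not.2 hinj⟩
  have hmkQ : ¬ Function.Injective (LinearMap.range f).mkQ := by
    rwa [← LinearMap.ker_eq_bot, Submodule.ker_mkQ, LinearMap.range_eq_bot]
  have hcoker : Mdl.of Λ (B ⧸ LinearMap.range f) ∈ U := hfactor _
    ⟨(LinearMap.range f).mkQ, (LinearMap.range f).mkQ_surjective, hmkQ⟩
  exact hB (hU.ext_closed _ hrange _ hcoker B (extOf_quotient B (LinearMap.range f)))

theorem IsTorsionClass.subset_of_forall_isBrick_mem [IsArtinianRing Λ] {T U : Set (Mdl Λ)}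
    (hT : IsTorsionClass Λ T) (hU : IsTorsionClass Λ U) (h : ∀ B ∈ T, IsBrick Λ B → B ∈ U) :
    T ⊆ U := by
  intro X hX
  by_contra hXU
  have := hT.fin X hX
  obtain ⟨B, hXB, hBU, hfactor⟩ :=
    exists_isFactor_notMem_of_isProperFactor_mem hU.iso_closed hXU
  have hBT : B ∈ T := hT.factor_closed X hX B hXB
  have := hT.fin B hBT
  exact hBU (h B hBT (hU.isBrick_of_isProperFactor_mem hBU hfactor))

theorem IsTorsionClass.torsJoin_bricks_eq [IsArtinianRing Λ] {T : Set (Mdl Λ)}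
    (hT : IsTorsionClass Λ T) :
    TorsJoin Λ ((fun B ↦ FiltSet Λ (GenSet Λ B)) '' {B ∈ T | IsBrick Λ B}) = T := by
  refine Set.Subset.antisymm (hT.torsJoin_subset ?_) ?_
  · rintro _ ⟨B, ⟨hBT, -⟩, rfl⟩
    exact hT.filtSet_genSet_subset hBT
  · exact fun X hX U ⟨hU, hle⟩ ↦ hT.subset_of_forall_isBrick_mem hU
      (fun B hBT hB ↦ hle _ ⟨B, ⟨hBT, hB⟩, rfl⟩ (self_mem_filtSet_genSet B)) hX

theorem CompletelyJoinIrred.exists_isBrick [IsArtinianRing Λ] {T : Set (Mdl Λ)}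
    (hT : CompletelyJoinIrred Λ T) : ∃ M, IsBrick Λ M ∧ T = FiltSet Λ (GenSet Λ M) := by
  obtain ⟨hTors, hirred⟩ := hT
  obtain ⟨M, ⟨-, hM⟩, hMT⟩ := hirred _ (by
    rintro _ ⟨B, ⟨-, _, -⟩, rfl⟩
    exact isTorsionClass_filtSet_genSet B) hTors.torsJoin_bricks_eq
  exact ⟨M, hM, hMT.symm⟩

end TorsionClasses

theorem statement2_general (Λ : Type) [Ring Λ] [IsArtinianRing Λ] :
    (∀ M : Mdl Λ, IsBrick Λ M → CompletelyJoinIrred Λ (FiltSet Λ (GenSet Λ M))) ∧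
    (∀ M M' : Mdl Λ, IsBrick Λ M → IsBrick Λ M' → MIso Λ M M' →
      FiltSet Λ (GenSet Λ M) = FiltSet Λ (GenSet Λ M')) ∧
    (∀ M M' : Mdl Λ, IsBrick Λ M → IsBrick Λ M' →
      FiltSet Λ (GenSet Λ M) = FiltSet Λ (GenSet Λ M') → MIso Λ M M') ∧
    (∀ T : Set (Mdl Λ), CompletelyJoinIrred Λ T →
      ∃ M : Mdl Λ, IsBrick Λ M ∧ T = FiltSet Λ (GenSet Λ M)) :=
  ⟨fun _ hM ↦ hM.completelyJoinIrred,
    fun _ _ _ _ h ↦ congrArg (FiltSet Λ) h.genSet_eq,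
    fun _ _ hM hM' ↦ hM.mIso_of_filtSet_genSet_eq hM',
    fun _ hT ↦ hT.exists_isBrick⟩

/-- The map `ζ : [M] ↦ Filt(Gen(M))` is a bijection from the set of
isomorphism classes of bricks over `Λ` onto the set of completely join-irreducible
elements of `tors Λ`: it is well defined on isomorphism classes, lands in the completely
join-irreducible torsion classes, is injective up to isomorphism, and is surjective. -/
theorem statement2 (k : Type) [Field k] (Λ : Type) [Ring Λ] [Algebra k Λ]
    [FiniteDimensional k Λ] :
    (∀ M : Mdl Λ, IsBrick Λ M → CompletelyJoinIrred Λ (FiltSet Λ (GenSet Λ M))) ∧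
    (∀ M M' : Mdl Λ, IsBrick Λ M → IsBrick Λ M' → MIso Λ M M' →
      FiltSet Λ (GenSet Λ M) = FiltSet Λ (GenSet Λ M')) ∧
    (∀ M M' : Mdl Λ, IsBrick Λ M → IsBrick Λ M' →
      FiltSet Λ (GenSet Λ M) = FiltSet Λ (GenSet Λ M') → MIso Λ M M') ∧
    (∀ T : Set (Mdl Λ), CompletelyJoinIrred Λ T →
      ∃ M : Mdl Λ, IsBrick Λ M ∧ T = FiltSet Λ (GenSet Λ M)) := by
  have : IsArtinianRing Λ := IsArtinianRing.of_finite k Λ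
  exact statement2_general Λ
end

section
/- Let S be a class of indecomposable modules in mod Λ that is closed under taking indecomposable direct summands of factor modules. Then Filt(S) is closed under taking factor modules. Dually, if S is closed under taking indecomposable direct summands of submodules, then Filt(S) is closed under taking submodules. -/
variable (Λ : Type) [Ring Λ]

/-!
`Filt S` is closed under extensions, and it contains every Artinian module whose indecomposable
direct summands lie in `S`, because such a module is obtained from those summands by repeatedly
splitting it. So under either closure hypothesis on `S`, every factor module (respectively
submodule) of a module in `S` lies in `Filt S`. If `A ≤ M` is the last step of a filtration, a
factor module of `M` is an extension of a factor module of `M ⧸ A` by one of `A`, and likewise for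
submodules, so closure passes from `S` to `Filt S` by induction on the length of the filtration.
-/

section

variable {Λ} {S : Set (Mdl Λ)}

theorem Mdl.induction_of_isArtinian {P : Mdl Λ → Prop}
    (h : ∀ M : Mdl Λ, (∀ N : Submodule Λ M, N < ⊤ → P (Mdl.of Λ N)) → P M)
    (M : Mdl Λ) [IsArtinian Λ M] : P M := by
  -- `P` need not be invariant under isomorphism, so the induction is on the range of an embedding
  -- into `M`.
  suffices key : ∀ (N : Submodule Λ M) (D : Mdl Λ) (f : D →ₗ[Λ] M),
      Function.Injective f → LinearMap.range f = N → P D from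
    key _ M LinearMap.id Function.injective_id rfl
  intro N
  induction N using IsArtinian.induction with
  | _ N ih =>
    rintro D f hf rfl
    refine h D fun E hE ↦ ih (LinearMap.range (f ∘ₗ E.subtype)) ?_ (Mdl.of Λ E) (f ∘ₗ E.subtype)
      (hf.comp E.injective_subtype) rfl
    rw [LinearMap.range_comp, E.range_subtype, LinearMap.range_eq_map]
    exact Submodule.map_strictMono_of_injective hf hE

theorem IsSummand.trans {A B C : Mdl Λ} (hAB : IsSummand Λ A B) (hBC : IsSummand Λ B C) :
    IsSummand Λ A C := by
  obtain ⟨i, p, hpi⟩ := hAB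
  obtain ⟨j, q, hqj⟩ := hBC
  refine ⟨j ∘ₗ i, p ∘ₗ q, ?_⟩
  calc (p ∘ₗ q) ∘ₗ (j ∘ₗ i) = p ∘ₗ (q ∘ₗ j) ∘ₗ i := rfl
    _ = LinearMap.id := by rw [hqj, LinearMap.id_comp, hpi]

theorem IsSummand.refl (M : Mdl Λ) : IsSummand Λ M M :=
  ⟨LinearMap.id, LinearMap.id, rfl⟩

theorem IsSummand.of_isCompl {M : Mdl Λ} {p q : Submodule Λ M} (h : IsCompl p q) :
    IsSummand Λ (Mdl.of Λ p) M :=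
  ⟨p.subtype, p.projectionOnto q h, LinearMap.ext (Submodule.projectionOnto_apply_left h)⟩

namespace Filt

theorem of_equiv {M N : Mdl Λ} (hM : Filt Λ S M) (e : M ≃ₗ[Λ] N) : Filt Λ S N := by
  induction hM generalizing N with
  | of_subsingleton M h => exact .of_subsingleton N e.symm.toEquiv.subsingleton
  | step M A X hX _ eX ih =>
    obtain ⟨eX⟩ := eX
    exact .step N (A.map e.toLinearMap) X hX (ih (e.submoduleMap A))
      ⟨(Submodule.Quotient.equiv A (A.map e.toLinearMap) e rfl).symm.trans eX⟩

theorem of_mem {X : Mdl Λ} (hX : X ∈ S) : Filt Λ S X :=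
  .step X ⊥ X hX (.of_subsingleton _ (inferInstanceAs (Subsingleton (⊥ : Submodule Λ X))))
    ⟨Submodule.quotEquivOfEqBot ⊥ rfl⟩

theorem of_surjective_of_ker_eq {M B : Mdl Λ} {A : Submodule Λ M} {g : M →ₗ[Λ] B}
    (hA : Filt Λ S (Mdl.of Λ A)) (hB : Filt Λ S B) (hg : Function.Surjective g)
    (hker : LinearMap.ker g = A) : Filt Λ S M := by
  induction hB generalizing M A with
  | of_subsingleton B h =>
    have hA_top : A = ⊤ := by
      rw [← hker, eq_top_iff]
      exact fun _ _ ↦ Subsingleton.elim _ _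
    exact hA.of_equiv (LinearEquiv.ofTop A hA_top)
  | step B N X hX _ e ih =>
    obtain ⟨e⟩ := e
    have hle : A ≤ N.comap g := hker ▸ LinearMap.ker_le_comap g
    have hker_res : LinearMap.ker (g.submoduleComap N) = A.comap (N.comap g).subtype :=
      hker ▸ LinearMap.ker_restrict _
    have hcomap : Filt Λ S (Mdl.of Λ (N.comap g)) :=
      ih (hA.of_equiv (Submodule.comapSubtypeEquivOfLe hle).symm)
        (g.submoduleComap_surjective_of_surjective N hg) hker_res
    have hker_comp : N.comap g = LinearMap.ker (N.mkQ ∘ₗ g) := by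
      rw [LinearMap.ker_comp, N.ker_mkQ]
    have equot : (M ⧸ N.comap g) ≃ₗ[Λ] B ⧸ N :=
      (Submodule.quotEquivOfEq _ _ hker_comp).trans
        ((N.mkQ ∘ₗ g).quotKerEquivOfSurjective (N.mkQ_surjective.comp hg))
    exact .step M (N.comap g) X hX hcomap ⟨equot.trans e⟩

theorem of_isCompl {M : Mdl Λ} {p q : Submodule Λ M} (h : IsCompl p q)
    (hp : Filt Λ S (Mdl.of Λ p)) (hq : Filt Λ S (Mdl.of Λ q)) : Filt Λ S M :=
  of_surjective_of_ker_eq hp hq (Submodule.projectionOnto_surjective h.symm)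
    (Submodule.ker_projectionOnto h.symm)

theorem of_forall_isSummand_mem (M : Mdl Λ) [IsArtinian Λ M]
    (hS : ∀ D, IsSummand Λ D M → Indec Λ D → D ∈ S) : Filt Λ S M := by
  revert hS
  induction M using Mdl.induction_of_isArtinian with
  | h M ih =>
    intro hS
    rcases subsingleton_or_nontrivial M with hM | hM
    · exact .of_subsingleton M hM
    by_cases hindec : Indec Λ M
    · exact of_mem (hS M (IsSummand.refl M) hindec)
    obtain ⟨p, q, hpq, hp, hq⟩ :
        ∃ p q : Submodule Λ M, IsCompl p q ∧ p ≠ ⊥ ∧ q ≠ ⊥ := by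
      by_contra! hsplit
      exact hindec ⟨hM, fun p q hpq ↦ or_iff_not_imp_left.2 (hsplit p q hpq)⟩
    have filt_left {p q : Submodule Λ M} (hpq : IsCompl p q) (hq : q ≠ ⊥) :
        Filt Λ S (Mdl.of Λ p) :=
      ih p (lt_top_iff_ne_top.2 fun hp ↦ hq (eq_bot_of_top_isCompl (hp ▸ hpq)))
        fun D hD ↦ hS D (hD.trans (IsSummand.of_isCompl hpq))
    exact of_isCompl hpq (filt_left hpq hq) (filt_left hpq.symm hp)

theorem of_isFactor_s5 (hS : ∀ X ∈ S, ∀ Y, IsFactor Λ X Y → Filt Λ S Y) {M N : Mdl Λ}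
    (hM : Filt Λ S M) (hMN : IsFactor Λ M N) : Filt Λ S N := by
  induction hM generalizing N with
  | of_subsingleton M h =>
    obtain ⟨f, hf⟩ := hMN
    exact .of_subsingleton N hf.subsingleton
  | step M A X hX _ e ih =>
    obtain ⟨f, hf⟩ := hMN
    obtain ⟨e⟩ := e
    have himage : Filt Λ S (Mdl.of Λ (A.map f)) :=
      ih ⟨f.submoduleMap A, f.submoduleMap_surjective A⟩
    let fbar : M ⧸ A →ₗ[Λ] N ⧸ A.map f := A.mapQ (A.map f) f (Submodule.le_comap_map f A)
    have hfbar : Function.Surjective fbar :=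
      Function.Surjective.of_comp (g := A.mkQ) ((A.map f).mkQ_surjective.comp hf)
    have hquot : Filt Λ S (Mdl.of Λ (N ⧸ A.map f)) :=
      hS X hX _ ⟨fbar ∘ₗ e.symm.toLinearMap, hfbar.comp e.symm.surjective⟩
    exact of_surjective_of_ker_eq himage hquot (A.map f).mkQ_surjective (A.map f).ker_mkQ

theorem of_isSubmoduleOf (hS : ∀ X ∈ S, ∀ Y, IsSubmoduleOf Λ Y X → Filt Λ S Y) {M N : Mdl Λ}
    (hM : Filt Λ S M) (hNM : IsSubmoduleOf Λ N M) : Filt Λ S N := by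
  induction hM generalizing N with
  | of_subsingleton M h =>
    obtain ⟨f, hf⟩ := hNM
    exact .of_subsingleton N hf.subsingleton
  | step M A X hX _ e ih =>
    obtain ⟨f, hf⟩ := hNM
    obtain ⟨e⟩ := e
    have hpreimage : Filt Λ S (Mdl.of Λ (A.comap f)) :=
      ih ⟨f.submoduleComap A, fun x y hxy ↦ Subtype.ext (hf (congrArg Subtype.val hxy))⟩
    let g : N →ₗ[Λ] X := e.toLinearMap ∘ₗ A.mkQ ∘ₗ f
    have hker : LinearMap.ker g = A.comap f := by
      rw [LinearEquiv.ker_comp, LinearMap.ker_comp, A.ker_mkQ]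
    have hrange : Filt Λ S (Mdl.of Λ (LinearMap.range g)) :=
      hS X hX _ ⟨(LinearMap.range g).subtype, Submodule.injective_subtype _⟩
    exact of_surjective_of_ker_eq hpreimage hrange g.surjective_rangeRestrict
      (g.ker_rangeRestrict.trans hker)

end Filt

theorem statement5_general (hS : ∀ M ∈ S, IsArtinian Λ M) :
    ((∀ M ∈ S, ∀ N D : Mdl Λ, IsFactor Λ M N → IsSummand Λ D N → Indec Λ D → D ∈ S) →
      ∀ M ∈ FiltSet Λ S, ∀ N : Mdl Λ, IsFactor Λ M N → N ∈ FiltSet Λ S) ∧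
    ((∀ M ∈ S, ∀ N D : Mdl Λ, IsSubmoduleOf Λ N M → IsSummand Λ D N → Indec Λ D → D ∈ S) →
      ∀ M ∈ FiltSet Λ S, ∀ N : Mdl Λ, IsSubmoduleOf Λ N M → N ∈ FiltSet Λ S) := by
  constructor
  · refine fun hcl M hM N hMN ↦ Filt.of_isFactor_s5 (fun X hX Y hXY ↦ ?_) hM hMN
    have ⟨f, hf⟩ := hXY
    have := hS X hX
    have : IsArtinian Λ Y := isArtinian_of_surjective X f hf
    exact .of_forall_isSummand_mem Y fun D ↦ hcl X hX Y D hXY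
  · refine fun hcl M hM N hNM ↦ Filt.of_isSubmoduleOf (fun X hX Y hYX ↦ ?_) hM hNM
    have ⟨f, hf⟩ := hYX
    have := hS X hX
    have : IsArtinian Λ Y := isArtinian_of_injective f hf
    exact .of_forall_isSummand_mem Y fun D ↦ hcl X hX Y D hYX

end

/-- Let `S` be a class of indecomposable modules in `mod Λ`.
If `S` is closed under taking indecomposable direct summands of factor modules,
then `Filt(S)` is closed under factor modules. Dually, if `S` is closed under taking
indecomposable direct summands of submodules, then `Filt(S)` is closed under submodules. -/
theorem statement5 (k : Type) [Field k] (Λ : Type) [Ring Λ] [Algebra k Λ]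
    [FiniteDimensional k Λ] (S : Set (Mdl Λ))
    (hS : ∀ M ∈ S, Module.Finite Λ M.carrier ∧ Indec Λ M) :
    ((∀ M ∈ S, ∀ N D : Mdl Λ, IsFactor Λ M N → IsSummand Λ D N → Indec Λ D → D ∈ S) →
      ∀ M ∈ FiltSet Λ S, ∀ N : Mdl Λ, IsFactor Λ M N → N ∈ FiltSet Λ S) ∧
    ((∀ M ∈ S, ∀ N D : Mdl Λ, IsSubmoduleOf Λ N M → IsSummand Λ D N → Indec Λ D → D ∈ S) →
      ∀ M ∈ FiltSet Λ S, ∀ N : Mdl Λ, IsSubmoduleOf Λ N M → N ∈ FiltSet Λ S) := by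
  have : IsArtinianRing Λ := IsArtinianRing.of_finite k Λ
  exact statement5_general fun M hM ↦ have := (hS M hM).1; inferInstance
end
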